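/- Improved subadditivity (Corollary 4, finite case): Let ρ₁₂ be a density matrix on H₁⊗H₂ and let P^1,…,P^M be positive semidefinite operators on H₁ with ∑_{α=1}^M P^α = id_{H₁}. Set n^α = Tr[(P^α⊗id₂) ρ₁₂] and, for each α with n^α > 0, ρ₂^α = Tr₁[(P^α⊗id₂) ρ₁₂]/n^α. Then S[ρ₁₂] ≤ S[ρ₁] + ∑_{α : n^α>0} n^α S[ρ₂^α] ≤ S[ρ₁] + S[ρ₂]. -/

import Mathlib

open Matrix Kronecker Real
open scoped ComplexOrder

/-- Von Neumann entropy of a (Hermitian) matrix: the sum of `-λ ln λ` over its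
eigenvalues, with the convention `0 ln 0 = 0`. -/
noncomputable def entropy {n : Type*} [Fintype n] [DecidableEq n]
    (A : Matrix n n ℂ) : ℝ :=
  if h : A.IsHermitian then ∑ i, Real.negMulLog (h.eigenvalues i) else 0

/-- Partial trace over the first factor of a twofold tensor product. -/
noncomputable def ptraceFst {m k : Type*} [Fintype m]
    (ρ : Matrix (m × k) (m × k) ℂ) : Matrix k k ℂ :=
  Matrix.of fun i j => ∑ a : m, ρ (a, i) (a, j)

/-- Partial trace over the second factor of a twofold tensor product. -/
noncomputable def ptraceSnd {m k : Type*} [Fintype k]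
    (ρ : Matrix (m × k) (m × k) ℂ) : Matrix m m ℂ :=
  Matrix.of fun i j => ∑ a : k, ρ (i, a) (j, a)

/-- Partial trace over the first factor of a threefold tensor product
(indexed as `(H₁ ⊗ H₂) ⊗ H₃`). -/
noncomputable def ptraceFst₃ {a b c : Type*} [Fintype a]
    (ρ : Matrix ((a × b) × c) ((a × b) × c) ℂ) : Matrix (b × c) (b × c) ℂ :=
  Matrix.of fun p q => ∑ i : a, ρ ((i, p.1), p.2) ((i, q.1), q.2)

/-!
Write `S(A)` also for the extension of the entropy to positive semidefinite matrices that is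
homogeneous of degree one. Since the averages `∑ n^α S[ρ₂^α]` then become plain sums, both
inequalities follow from the variational principle `S(A) = inf {-tr (A H) | tr e^H ≤ 1}` over
Hermitian `H`. A near-optimal `H` for `∑ A_i` is admissible for every `A_i`, so `S` is
superadditive; this is the second inequality.

For the first inequality, a Naimark dilation replaces `P^α` by the measurement in an orthonormal
basis `x` of a larger first factor. If `A` and `L_x` are near-optimal for `ρ₁` and for the
unnormalised conditional states, then Golden–Thompson gives
`tr exp (A ⊗ 1 + ∑ |x⟩⟨x| ⊗ L_x) ≤ ∑ ⟨x| e^A |x⟩ tr e^{L_x} ≤ tr e^A ≤ 1`,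
so `A ⊗ 1 + ∑ |x⟩⟨x| ⊗ L_x` is admissible for the joint state. Superadditivity regroups the basis
outcomes into the outcomes `α`.
-/

section LieTrotter

open Filter Topology

variable {𝔸 : Type*} [NormedRing 𝔸] [NormOneClass 𝔸]

lemma norm_pow_sub_pow_le {x y : 𝔸} {c : ℝ} (hx : ‖x‖ ≤ c) (hy : ‖y‖ ≤ c) (n : ℕ) :
    ‖x ^ n - y ^ n‖ ≤ n * c ^ (n - 1) * ‖x - y‖ := by
  induction n with
  | zero => simp
  | succ n ih =>
    have hc : 0 ≤ c := (norm_nonneg x).trans hx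
    have telescope : x ^ (n + 1) - y ^ (n + 1) = x * (x ^ n - y ^ n) + (x - y) * y ^ n := by
      rw [pow_succ', pow_succ']; noncomm_ring
    have hpow : n * (c * c ^ (n - 1)) = n * c ^ n := by
      cases n <;> simp [pow_succ']
    calc ‖x ^ (n + 1) - y ^ (n + 1)‖
        ≤ ‖x‖ * ‖x ^ n - y ^ n‖ + ‖x - y‖ * ‖y‖ ^ n := by
          rw [telescope]
          grw [norm_add_le, norm_mul_le, norm_mul_le, norm_pow_le]
      _ ≤ c * (n * c ^ (n - 1) * ‖x - y‖) + ‖x - y‖ * c ^ n := by gcongr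
      _ = n * (c * c ^ (n - 1)) * ‖x - y‖ + ‖x - y‖ * c ^ n := by ring
      _ = (n + 1 : ℕ) * c ^ (n + 1 - 1) * ‖x - y‖ := by
          rw [hpow, Nat.add_sub_cancel]; push_cast; ring

variable [NormedAlgebra ℝ 𝔸]

lemma eventually_norm_le_exp_of_hasDerivAt {f : ℝ → 𝔸} {a : 𝔸} (hf : HasDerivAt f a 0)
    (hf0 : f 0 = 1) : ∃ K : ℝ, ∀ᶠ t in 𝓝[>] 0, ‖f t‖ ≤ Real.exp (K * t) := by
  obtain ⟨K, hK⟩ := hf.isBigO_sub.bound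
  refine ⟨K, ?_⟩
  filter_upwards [nhdsWithin_le_nhds hK, self_mem_nhdsWithin] with t ht (htpos : 0 < t)
  rw [hf0, sub_zero, Real.norm_of_nonneg htpos.le] at ht
  calc ‖f t‖ = ‖1 + (f t - 1)‖ := by rw [add_sub_cancel]
    _ ≤ K * t + 1 := by grw [norm_add_le, norm_one, ht, add_comm]
    _ ≤ Real.exp (K * t) := Real.add_one_le_exp _

lemma tendsto_norm_pow_sub_pow_of_hasDerivAt {f g : ℝ → 𝔸} {a : 𝔸} (hf : HasDerivAt f a 0)
    (hg : HasDerivAt g a 0) (hf0 : f 0 = 1) (hg0 : g 0 = 1) :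
    Tendsto (fun n : ℕ => ‖f (n : ℝ)⁻¹ ^ n - g (n : ℝ)⁻¹ ^ n‖) atTop (𝓝 0) := by
  obtain ⟨K, hK⟩ := eventually_norm_le_exp_of_hasDerivAt hf hf0
  obtain ⟨L, hL⟩ := eventually_norm_le_exp_of_hasDerivAt hg hg0
  set C := max (max K L) 0
  have hinv : Tendsto (fun n : ℕ => (n : ℝ)⁻¹) atTop (𝓝[>] 0) :=
    tendsto_inv_atTop_nhdsGT_zero.comp tendsto_natCast_atTop_atTop
  have hslope : Tendsto (fun n : ℕ => Real.exp C * (n * ‖f (n : ℝ)⁻¹ - g (n : ℝ)⁻¹‖))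
      atTop (𝓝 0) := by
    have := ((hf.sub hg).tendsto_slope_zero_right.comp hinv).norm.const_mul (Real.exp C)
    simpa [Function.comp_def, hf0, hg0, norm_smul] using this
  refine squeeze_zero' (.of_forall fun _ => norm_nonneg _) ?_ hslope
  filter_upwards [hinv.eventually hK, hinv.eventually hL, eventually_gt_atTop 0]
    with n hfn hgn hn
  have hpow : Real.exp (C * (n : ℝ)⁻¹) ^ (n - 1) ≤ Real.exp C := by
    calc Real.exp (C * (n : ℝ)⁻¹) ^ (n - 1) ≤ Real.exp (C * (n : ℝ)⁻¹) ^ n :=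
          pow_le_pow_right₀ (Real.one_le_exp (by positivity)) (Nat.sub_le n 1)
      _ = Real.exp C := by
          rw [← Real.exp_nat_mul]; congr 1; field_simp
  calc ‖f (n : ℝ)⁻¹ ^ n - g (n : ℝ)⁻¹ ^ n‖
      ≤ n * Real.exp (C * (n : ℝ)⁻¹) ^ (n - 1) * ‖f (n : ℝ)⁻¹ - g (n : ℝ)⁻¹‖ := by
        apply norm_pow_sub_pow_le
        · grw [hfn, le_max_left K L, le_max_left (max K L) 0]
        · grw [hgn, le_max_right K L, le_max_left (max K L) 0]
    _ ≤ n * Real.exp C * ‖f (n : ℝ)⁻¹ - g (n : ℝ)⁻¹‖ := by gcongr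
    _ = Real.exp C * (n * ‖f (n : ℝ)⁻¹ - g (n : ℝ)⁻¹‖) := by ring

theorem tendsto_exp_mul_exp_pow [CompleteSpace 𝔸] (a b : 𝔸) :
    Tendsto (fun n : ℕ =>
        (NormedSpace.exp ((n : ℝ)⁻¹ • a) * NormedSpace.exp ((n : ℝ)⁻¹ • b)) ^ n)
      atTop (𝓝 (NormedSpace.exp (a + b))) := by
  have hderiv (x : 𝔸) : HasDerivAt (fun t : ℝ => NormedSpace.exp (t • x)) x 0 := by
    simpa using hasDerivAt_exp_smul_const (𝕂 := ℝ) x (0 : ℝ)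
  have hprod : HasDerivAt (fun t : ℝ => NormedSpace.exp (t • a) * NormedSpace.exp (t • b))
      (a + b) 0 := by
    simpa using (hderiv a).fun_mul (hderiv b)
  have hexp : ∀ᶠ n : ℕ in atTop,
      NormedSpace.exp ((n : ℝ)⁻¹ • (a + b)) ^ n = NormedSpace.exp (a + b) := by
    filter_upwards [eventually_gt_atTop 0] with n hn
    let _ : NormedAlgebra ℚ 𝔸 := NormedAlgebra.restrictScalars ℚ ℝ 𝔸
    rw [← NormedSpace.exp_nsmul, ← Nat.cast_smul_eq_nsmul ℝ,
      smul_inv_smul₀ (Nat.cast_ne_zero.2 hn.ne')]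
  rw [tendsto_iff_norm_sub_tendsto_zero]
  refine (tendsto_norm_pow_sub_pow_of_hasDerivAt hprod (hderiv (a + b))
    (by simp) (by simp)).congr' ?_
  filter_upwards [hexp] with n hn
  rw [hn]

end LieTrotter

section GoldenThompson

variable {n 𝕜 : Type*} [Fintype n] [RCLike 𝕜]

lemma norm_trace_mul_sq_le (A B : Matrix n n 𝕜) :
    ‖(A * B).trace‖ ^ 2 ≤ ‖(Aᴴ * A).trace‖ * ‖(Bᴴ * B).trace‖ := by
  classical
  let _ : SeminormedAddCommGroup (Matrix n n 𝕜) := toMatrixSeminormedAddCommGroup 1 .one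
  let _ : InnerProductSpace 𝕜 (Matrix n n 𝕜) := toMatrixInnerProductSpace 1 .one
  have inner_eq (X Y : Matrix n n 𝕜) : inner 𝕜 X Y = (Y * Xᴴ).trace :=
    congrArg (fun Z => (Z * Xᴴ).trace) (mul_one Y)
  calc ‖(A * B).trace‖ ^ 2 = ‖inner 𝕜 Aᴴ B‖ * ‖inner 𝕜 B Aᴴ‖ := by
        rw [norm_inner_symm B, inner_eq, conjTranspose_conjTranspose, trace_mul_comm, sq]
    _ ≤ RCLike.re (inner 𝕜 Aᴴ Aᴴ) * RCLike.re (inner 𝕜 B B) := inner_mul_inner_self_le _ _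
    _ ≤ ‖inner 𝕜 Aᴴ Aᴴ‖ * ‖inner 𝕜 B B‖ :=
        mul_le_mul (RCLike.re_le_norm _) (RCLike.re_le_norm _) inner_self_nonneg (norm_nonneg _)
    _ = ‖(Aᴴ * A).trace‖ * ‖(Bᴴ * B).trace‖ := by
        rw [inner_eq, inner_eq, conjTranspose_conjTranspose, trace_mul_comm B]

open scoped MatrixOrder in
lemma exists_conjTranspose_mul_self_eq {A : Matrix n n 𝕜} (hA : A.PosSemidef) :
    ∃ Q : Matrix n n 𝕜, Qᴴ * Q = A := by
  classical
  obtain ⟨Q, hQ⟩ := CStarAlgebra.nonneg_iff_eq_star_mul_self.mp hA.nonneg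
  exact ⟨Q, hQ.symm⟩

lemma trace_mul_nonneg {A B : Matrix n n 𝕜} (hA : A.PosSemidef) (hB : B.PosSemidef) :
    0 ≤ (A * B).trace := by
  obtain ⟨Q, rfl⟩ := exists_conjTranspose_mul_self_eq hA
  rw [mul_assoc, trace_mul_comm]
  exact (hB.mul_mul_conjTranspose_same Q).trace_nonneg

variable [DecidableEq n]

lemma trace_mul_pow_comm {R : Type*} [CommSemiring R] (A B : Matrix n n R) (p : ℕ) :
    ((A * B) ^ p).trace = ((B * A) ^ p).trace := by
  cases p with
  | zero => simp
  | succ p => rw [pow_succ', mul_assoc, ← mul_pow_mul, trace_mul_comm, mul_assoc, ← pow_succ]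

lemma trace_conjTranspose_mul_self_pow_of_isHermitian {A B : Matrix n n 𝕜} (hA : A.IsHermitian)
    (hB : B.IsHermitian) (p : ℕ) :
    (((A * B)ᴴ * (A * B)) ^ p).trace = ((A ^ 2 * B ^ 2) ^ p).trace := by
  rw [conjTranspose_mul, hA.eq, hB.eq, mul_assoc, trace_mul_pow_comm]
  noncomm_ring

lemma trace_conjTranspose_sq_mul_sq_pow (X : Matrix n n 𝕜) (p : ℕ) :
    (((X ^ 2)ᴴ * X ^ 2) ^ p).trace = (((Xᴴ * X) * (X * Xᴴ)) ^ p).trace := by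
  rw [sq, conjTranspose_mul, mul_assoc, trace_mul_pow_comm]
  noncomm_ring

/- The two estimates are proved together: squaring `X` reduces the first one to the second for the
Hermitian matrices `Xᴴ * X` and `X * Xᴴ`, and the second one is the first for `A * B` followed by
the second for `A ^ 2` and `B ^ 2`. -/
lemma norm_trace_two_pow_le_and_norm_trace_mul_two_pow_le (j : ℕ) :
    (∀ X : Matrix n n 𝕜, ‖(X ^ 2 ^ (j + 1)).trace‖ ≤ ‖((Xᴴ * X) ^ 2 ^ j).trace‖) ∧
    ∀ A B : Matrix n n 𝕜, A.IsHermitian → B.IsHermitian →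
      ‖((A * B) ^ 2 ^ j).trace‖ ^ 2 ≤
        ‖(A ^ 2 ^ (j + 1)).trace‖ * ‖(B ^ 2 ^ (j + 1)).trace‖ := by
  induction j with
  | zero =>
    refine ⟨fun X => ?_, fun A B hA hB => ?_⟩
    · have := norm_trace_mul_sq_le X X
      rw [← sq, ← sq] at this
      simpa using le_of_sq_le_sq this (norm_nonneg _)
    · simpa [sq, hA.eq, hB.eq] using norm_trace_mul_sq_le A B
  | succ j ih =>
    obtain ⟨ih_pow, ih_mul⟩ := ih
    have pow_sq (X : Matrix n n 𝕜) (i : ℕ) : X ^ 2 ^ (i + 1) = (X ^ 2) ^ 2 ^ i := by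
      rw [← pow_mul, pow_succ']
    refine ⟨fun X => ?_, fun A B hA hB => ?_⟩
    · have hmul := ih_mul _ _ (isHermitian_conjTranspose_mul_self X)
        (isHermitian_mul_conjTranspose_self X)
      rw [trace_mul_pow_comm X Xᴴ, ← sq] at hmul
      calc ‖(X ^ 2 ^ (j + 1 + 1)).trace‖ ≤ ‖(((X ^ 2)ᴴ * X ^ 2) ^ 2 ^ j).trace‖ := by
            rw [pow_sq]; exact ih_pow (X ^ 2)
        _ = ‖(((Xᴴ * X) * (X * Xᴴ)) ^ 2 ^ j).trace‖ := by
            rw [trace_conjTranspose_sq_mul_sq_pow]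
        _ ≤ ‖((Xᴴ * X) ^ 2 ^ (j + 1)).trace‖ := le_of_sq_le_sq hmul (norm_nonneg _)
    · calc ‖((A * B) ^ 2 ^ (j + 1)).trace‖ ^ 2
          ≤ ‖(((A * B)ᴴ * (A * B)) ^ 2 ^ j).trace‖ ^ 2 := by gcongr; exact ih_pow (A * B)
        _ = ‖((A ^ 2 * B ^ 2) ^ 2 ^ j).trace‖ ^ 2 := by
            rw [trace_conjTranspose_mul_self_pow_of_isHermitian hA hB]
        _ ≤ ‖((A ^ 2) ^ 2 ^ (j + 1)).trace‖ * ‖((B ^ 2) ^ 2 ^ (j + 1)).trace‖ :=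
            ih_mul _ _ (hA.pow 2) (hB.pow 2)
        _ = ‖(A ^ 2 ^ (j + 1 + 1)).trace‖ * ‖(B ^ 2 ^ (j + 1 + 1)).trace‖ := by
            rw [← pow_sq, ← pow_sq]

lemma norm_trace_mul_pow_le (k : ℕ) {A B : Matrix n n 𝕜} (hA : A.IsHermitian)
    (hB : B.IsHermitian) :
    ‖((A * B) ^ 2 ^ k).trace‖ ≤ ‖(A ^ 2 ^ k * B ^ 2 ^ k).trace‖ := by
  induction k generalizing A B with
  | zero => simp
  | succ k ih =>
    calc ‖((A * B) ^ 2 ^ (k + 1)).trace‖ ≤ ‖(((A * B)ᴴ * (A * B)) ^ 2 ^ k).trace‖ :=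
          (norm_trace_two_pow_le_and_norm_trace_mul_two_pow_le k).1 _
      _ = ‖((A ^ 2 * B ^ 2) ^ 2 ^ k).trace‖ := by
          rw [trace_conjTranspose_mul_self_pow_of_isHermitian hA hB]
      _ ≤ ‖((A ^ 2) ^ 2 ^ k * (B ^ 2) ^ 2 ^ k).trace‖ := ih (hA.pow 2) (hB.pow 2)
      _ = ‖(A ^ 2 ^ (k + 1) * B ^ 2 ^ (k + 1)).trace‖ := by
          rw [← pow_mul, ← pow_mul, pow_succ']

theorem norm_trace_exp_add_le {A B : Matrix n n 𝕜} (hA : A.IsHermitian) (hB : B.IsHermitian) :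
    ‖(NormedSpace.exp (A + B)).trace‖ ≤ ‖(NormedSpace.exp A * NormedSpace.exp B).trace‖ := by
  cases isEmpty_or_nonempty n
  · simp [Matrix.trace]
  let _ : NormedRing (Matrix n n 𝕜) := Matrix.linftyOpNormedRing
  let _ : NormedAlgebra ℝ (Matrix n n 𝕜) := Matrix.linftyOpNormedAlgebra
  have : NormOneClass (Matrix n n 𝕜) := Matrix.linfty_opNormOneClass
  have hlim := (((continuous_id.matrix_trace (R := 𝕜)).norm.tendsto _).comp
    (tendsto_exp_mul_exp_pow A B)).comp (tendsto_pow_atTop_atTop_of_one_lt one_lt_two)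
  refine le_of_tendsto hlim (.of_forall fun k => ?_)
  have exp_pow (C : Matrix n n 𝕜) :
      NormedSpace.exp (((2 ^ k : ℕ) : ℝ)⁻¹ • C) ^ 2 ^ k = NormedSpace.exp C := by
    rw [← Matrix.exp_nsmul, ← Nat.cast_smul_eq_nsmul ℝ, smul_inv_smul₀ (by positivity)]
  have isHermitian_exp {C : Matrix n n 𝕜} (hC : C.IsHermitian) :
      (NormedSpace.exp (((2 ^ k : ℕ) : ℝ)⁻¹ • C)).IsHermitian :=
    (hC.smul (.all _)).exp
  have := norm_trace_mul_pow_le k (isHermitian_exp hA) (isHermitian_exp hB)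
  rwa [exp_pow, exp_pow] at this

lemma posSemidef_exp {A : Matrix n n 𝕜} (hA : A.IsHermitian) :
    (NormedSpace.exp A).PosSemidef := by
  have hsq : NormedSpace.exp A = (NormedSpace.exp ((2 : ℝ)⁻¹ • A))ᴴ *
      NormedSpace.exp ((2 : ℝ)⁻¹ • A) := by
    rw [((hA.smul (.all _)).exp).eq, ← sq, ← Matrix.exp_nsmul, ← Nat.cast_smul_eq_nsmul ℝ,
      Nat.cast_two, smul_inv_smul₀ two_ne_zero]
  rw [hsq]
  exact posSemidef_conjTranspose_mul_self _

theorem trace_exp_add_le {A B : Matrix n n 𝕜} (hA : A.IsHermitian) (hB : B.IsHermitian) :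
    (NormedSpace.exp (A + B)).trace ≤ (NormedSpace.exp A * NormedSpace.exp B).trace := by
  have h := norm_trace_exp_add_le hA hB
  rw [← RCLike.ofReal_le_ofReal (K := 𝕜)] at h
  rwa [RCLike.norm_of_nonneg' (posSemidef_exp (hA.add hB)).trace_nonneg,
    RCLike.norm_of_nonneg' (trace_mul_nonneg (posSemidef_exp hA) (posSemidef_exp hB))] at h

end GoldenThompson

section Spectral

variable {n : Type*} [Fintype n] [DecidableEq n]

lemma exists_unitary_conj_diagonal_eigenvalues {A : Matrix n n ℂ} (hA : A.IsHermitian) :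
    ∃ U : Matrix n n ℂ, Uᴴ * U = 1 ∧ U * Uᴴ = 1 ∧
      A = U * diagonal (fun i => (hA.eigenvalues i : ℂ)) * Uᴴ :=
  ⟨hA.eigenvectorUnitary, Unitary.star_mul_self_of_mem hA.eigenvectorUnitary.2,
    Unitary.mul_star_self_of_mem hA.eigenvectorUnitary.2, hA.spectral_theorem⟩

lemma isHermitian_conj_diagonal_ofReal {m : Type*} (V : Matrix m n ℂ) (d : n → ℝ) :
    (V * diagonal (fun i => (d i : ℂ)) * Vᴴ).IsHermitian :=
  isHermitian_mul_mul_conjTranspose V <| isHermitian_diagonal_iff.2 fun _ => Complex.conj_ofReal _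

lemma exp_conj_diagonal_ofReal {U : Matrix n n ℂ} (hU : U * Uᴴ = 1) (d : n → ℝ) :
    NormedSpace.exp (U * diagonal (fun i => (d i : ℂ)) * Uᴴ) =
      U * diagonal (fun i => (Real.exp (d i) : ℂ)) * Uᴴ := by
  rw [← inv_eq_right_inv hU, exp_conj _ _ (.of_mul_eq_one _ hU), exp_diagonal]
  congr 3
  ext i
  rw [Pi.coe_exp, ← Complex.exp_eq_exp_ℂ, Complex.ofReal_exp]

lemma entropy_eq_sum_roots_charpoly {A : Matrix n n ℂ} (hA : A.IsHermitian) :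
    entropy A = (A.charpoly.roots.map fun z : ℂ => negMulLog z.re).sum := by
  simp [entropy, hA, hA.roots_charpoly_eq_eigenvalues]

lemma entropy_conj_diagonal_ofReal {m : Type*} [Fintype m] [DecidableEq m] {V : Matrix m n ℂ}
    (hV : Vᴴ * V = 1) (d : n → ℝ) :
    entropy (V * diagonal (fun i => (d i : ℂ)) * Vᴴ) = ∑ i, negMulLog (d i) := by
  set D := diagonal fun i => (d i : ℂ)
  have hcomm := charpoly_mul_comm' V (D * Vᴴ)
  rw [Matrix.mul_assoc D, hV, mul_one, ← Matrix.mul_assoc, charpoly_diagonal] at hcomm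
  have hroots := congrArg (fun p => (p.roots.map fun z : ℂ => negMulLog z.re).sum) hcomm
  have hne : ∏ i, (Polynomial.X - Polynomial.C (d i : ℂ)) ≠ 0 :=
    Finset.prod_ne_zero_iff.2 fun i _ => Polynomial.X_sub_C_ne_zero _
  rw [Polynomial.roots_mul (mul_ne_zero (by simp) (charpoly_monic _).ne_zero),
    Polynomial.roots_mul (mul_ne_zero (by simp) hne), Polynomial.roots_prod _ _ hne] at hroots
  rw [entropy_eq_sum_roots_charpoly (isHermitian_conj_diagonal_ofReal V d)]
  simpa [Multiset.map_nsmul, Multiset.sum_nsmul] using hroots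

lemma entropy_conj {m : Type*} [Fintype m] [DecidableEq m] {V : Matrix m n ℂ} (hV : Vᴴ * V = 1)
    {A : Matrix n n ℂ} (hA : A.IsHermitian) : entropy (V * A * Vᴴ) = entropy A := by
  obtain ⟨U, hU, -, hUA⟩ := exists_unitary_conj_diagonal_eigenvalues hA
  have hVU : (V * U)ᴴ * (V * U) = 1 := by
    rw [conjTranspose_mul, Matrix.mul_assoc, ← Matrix.mul_assoc Vᴴ, hV, Matrix.one_mul, hU]
  have hconj : V * A * Vᴴ =
      (V * U) * diagonal (fun i => (hA.eigenvalues i : ℂ)) * (V * U)ᴴ := by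
    conv_lhs => rw [hUA]
    simp only [conjTranspose_mul, Matrix.mul_assoc]
  rw [hconj, entropy_conj_diagonal_ofReal hVU, entropy, dif_pos hA]

lemma entropy_smul (c : ℝ) {A : Matrix n n ℂ} (hA : A.IsHermitian) :
    entropy ((c : ℂ) • A) = c * entropy A + negMulLog c * A.trace.re := by
  obtain ⟨U, hU, -, hUA⟩ := exists_unitary_conj_diagonal_eigenvalues hA
  have hconj : (c : ℂ) • A =
      U * diagonal (fun i => ((c * hA.eigenvalues i : ℝ) : ℂ)) * Uᴴ := by
    conv_lhs => rw [hUA]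
    rw [← Matrix.smul_mul, ← Matrix.mul_smul, ← diagonal_smul]
    congr 3
    ext i
    simp
  rw [hconj, entropy_conj_diagonal_ofReal hU, entropy, dif_pos hA, hA.trace_eq_sum_eigenvalues]
  simp [negMulLog_mul, Finset.sum_add_distrib, Finset.mul_sum, mul_comm, add_comm]

end Spectral

section Gibbs

lemma negMulLog_add_mul_le_exp_sub {x : ℝ} (hx : 0 ≤ x) (h : ℝ) :
    negMulLog x + x * h ≤ Real.exp h - x := by
  rcases hx.eq_or_lt with rfl | hx
  · simp [Real.exp_nonneg]
  · calc negMulLog x + x * h = x * (h - log x + 1) - x := by rw [negMulLog]; ring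
      _ ≤ x * Real.exp (h - log x) - x := by grw [Real.add_one_le_exp]
      _ = Real.exp h - x := by rw [Real.exp_sub, Real.exp_log hx, mul_div_cancel₀ _ hx.ne']

lemma mul_log_add_le {x δ : ℝ} (hx : 0 ≤ x) (hδ : 0 < δ) :
    x * log (x + δ) ≤ δ - negMulLog x := by
  have := negMulLog_add_mul_le_exp_sub hx (log (x + δ))
  rw [Real.exp_log (by positivity)] at this
  linarith

lemma neg_mul_log_add_div_le {x ε c : ℝ} (hx : 0 ≤ x) (hε : 0 < ε) (hc : 0 < c) :
    -(x * log ((x + ε) / c)) ≤ negMulLog x + x * log c := by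
  obtain rfl | hx := hx.eq_or_lt
  · simp
  · have hlog : x * log x ≤ x * log (x + ε) := by
      gcongr
      exact le_add_of_nonneg_right hε.le
    rw [log_div (by positivity) hc.ne', negMulLog]
    linarith

variable {n : Type*} [Fintype n] [DecidableEq n]

lemma posSemidef_exp_sub_smul_sub_smul_one {H : Matrix n n ℂ} (hH : H.IsHermitian) {x : ℝ}
    (hx : 0 ≤ x) :
    (NormedSpace.exp H - (x : ℂ) • H - ((x + negMulLog x : ℝ) : ℂ) • 1).PosSemidef := by
  obtain ⟨W, -, hW, hWH⟩ := exists_unitary_conj_diagonal_eigenvalues hH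
  set h := hH.eigenvalues
  have hconj : NormedSpace.exp H - (x : ℂ) • H - ((x + negMulLog x : ℝ) : ℂ) • 1 =
      W * diagonal (fun i => ((Real.exp (h i) - x * h i - (x + negMulLog x) : ℝ) : ℂ)) * Wᴴ := by
    have hdiag : diagonal (fun i => ((Real.exp (h i) - x * h i - (x + negMulLog x) : ℝ) : ℂ)) =
        diagonal (fun i => (Real.exp (h i) : ℂ)) - (x : ℂ) • diagonal (fun i => (h i : ℂ)) -
          ((x + negMulLog x : ℝ) : ℂ) • 1 := by
      ext i j
      obtain rfl | hij := eq_or_ne i j <;> simp [*]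
    rw [hdiag]
    simp only [mul_sub, sub_mul, Matrix.mul_smul, Matrix.smul_mul, mul_one, hW]
    rw [← exp_conj_diagonal_ofReal hW, ← hWH]
  rw [hconj]
  refine (PosSemidef.diagonal fun i => ?_).mul_mul_conjTranspose_same W
  have := negMulLog_add_mul_le_exp_sub hx (h i)
  exact Complex.zero_le_real.2 (by linarith)

/- Klein's inequality: the Fenchel–Young inequality `negMulLog_add_mul_le_exp_sub` holds for the
operator `H` at each eigenvalue of `A`, in particular on the corresponding eigenvector. -/
lemma entropy_add_trace_mul_le {A H : Matrix n n ℂ} (hA : A.PosSemidef) (hH : H.IsHermitian) :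
    entropy A + (A * H).trace.re ≤ (NormedSpace.exp H).trace.re - A.trace.re := by
  obtain ⟨U, hU', hU, hUA⟩ := exists_unitary_conj_diagonal_eigenvalues hA.1
  set a := hA.1.eigenvalues with ha
  have trace_conj (X : Matrix n n ℂ) : (Uᴴ * X * U).trace = X.trace := by
    rw [trace_mul_comm, ← mul_assoc, hU, one_mul]
  have trace_mul : (A * H).trace.re = ∑ i, a i * ((Uᴴ * H * U) i i).re := by
    conv_lhs => rw [hUA]
    rw [mul_assoc, mul_assoc, trace_mul_comm, mul_assoc, Matrix.trace]
    simp [diagonal_mul]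
  have hdiag (i : n) : negMulLog (a i) + a i * ((Uᴴ * H * U) i i).re ≤
      ((Uᴴ * NormedSpace.exp H * U) i i).re - a i := by
    have hpos := ((posSemidef_exp_sub_smul_sub_smul_one hH
      (hA.eigenvalues_nonneg i)).conjTranspose_mul_mul_same U).diag_nonneg (i := i)
    have hre : a i + negMulLog (a i) ≤
        ((Uᴴ * NormedSpace.exp H * U) i i).re - a i * ((Uᴴ * H * U) i i).re := by
      simpa [mul_sub, sub_mul, hU'] using (Complex.le_def.1 hpos).1
    linarith
  calc entropy A + (A * H).trace.re
      = ∑ i, (negMulLog (a i) + a i * ((Uᴴ * H * U) i i).re) := by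
        rw [trace_mul, Finset.sum_add_distrib, entropy, dif_pos hA.1]
    _ ≤ ∑ i, (((Uᴴ * NormedSpace.exp H * U) i i).re - a i) := Finset.sum_le_sum fun i _ => hdiag i
    _ = (NormedSpace.exp H).trace.re - A.trace.re := by
        rw [← trace_conj (NormedSpace.exp H), hA.1.trace_eq_sum_eigenvalues, Finset.sum_sub_distrib]
        simp [Matrix.trace, ha]

/-- The positively homogeneous extension `tr A * S(A / tr A) = S(A) + tr A * ln (tr A)` of the von
Neumann entropy from density matrices to positive semidefinite matrices. It turns the averages
`∑ α, n α * S(ρ α)` of entropies into plain sums over the unnormalised states `n α • ρ α`. -/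
noncomputable def homogeneousEntropy (A : Matrix n n ℂ) : ℝ :=
  entropy A - negMulLog A.trace.re

lemma homogeneousEntropy_zero : homogeneousEntropy (0 : Matrix n n ℂ) = 0 := by
  have hzero : entropy (0 : Matrix n n ℂ) = 0 := by
    simpa using entropy_smul 0 (isHermitian_zero (n := n) (α := ℂ))
  simp [homogeneousEntropy, hzero]

omit [DecidableEq n] in
lemma eq_zero_of_trace_re_eq_zero {A : Matrix n n ℂ} (hA : A.PosSemidef)
    (htr : A.trace.re = 0) : A = 0 := by
  rw [← hA.trace_eq_zero_iff, Complex.eq_re_of_ofReal_le hA.trace_nonneg, htr, Complex.ofReal_zero]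

lemma homogeneousEntropy_eq_mul_entropy_inv_smul {A : Matrix n n ℂ} (hA : A.PosSemidef) :
    homogeneousEntropy A = A.trace.re * entropy ((A.trace.re : ℂ)⁻¹ • A) := by
  by_cases htr : A.trace.re = 0
  · rw [eq_zero_of_trace_re_eq_zero hA htr, homogeneousEntropy_zero]
    simp
  · rw [← Complex.ofReal_inv, entropy_smul _ hA.1, homogeneousEntropy, negMulLog, negMulLog,
      log_inv]
    field_simp
    ring

theorem homogeneousEntropy_le_neg_trace_mul {A H : Matrix n n ℂ} (hA : A.PosSemidef)
    (hH : H.IsHermitian) (hexp : (NormedSpace.exp H).trace ≤ 1) :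
    homogeneousEntropy A ≤ -(A * H).trace.re := by
  set t := A.trace.re
  have htr : A.trace = t := Complex.eq_re_of_ofReal_le hA.trace_nonneg
  have ht : 0 ≤ t := (Complex.le_def.1 hA.trace_nonneg).1
  obtain h0 | hpos := ht.eq_or_lt
  · obtain rfl : A = 0 := eq_zero_of_trace_re_eq_zero hA h0.symm
    simp [homogeneousEntropy_zero]
  · have hklein : entropy ((t : ℂ)⁻¹ • A) + t⁻¹ * (A * H).trace.re ≤
        (NormedSpace.exp H).trace.re - 1 := by
      have hA' : ((t : ℂ)⁻¹ • A).PosSemidef := hA.smul (by simpa using ht)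
      simpa [htr, ← Complex.ofReal_inv, inv_mul_cancel₀ hpos.ne'] using
        entropy_add_trace_mul_le hA' hH
    have hexp' : (NormedSpace.exp H).trace.re ≤ 1 := (Complex.le_def.1 hexp).1
    calc homogeneousEntropy A = t * entropy ((t : ℂ)⁻¹ • A) :=
          homogeneousEntropy_eq_mul_entropy_inv_smul hA
      _ ≤ t * -(t⁻¹ * (A * H).trace.re) := by
          gcongr
          linarith
      _ = -(A * H).trace.re := by field_simp

lemma trace_conj_diagonal_mul_conj_diagonal {U : Matrix n n ℂ} (hU : Uᴴ * U = 1) (a b : n → ℝ) :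
    ((U * diagonal (fun i => (a i : ℂ)) * Uᴴ) *
      (U * diagonal (fun i => (b i : ℂ)) * Uᴴ)).trace.re = ∑ i, a i * b i := by
  rw [trace_mul_comm, mul_assoc, mul_assoc, trace_mul_comm]
  simp only [mul_assoc, hU, mul_one]
  rw [← mul_assoc Uᴴ, hU, one_mul, diagonal_mul_diagonal]
  simp [mul_comm]

theorem exists_neg_trace_mul_le_homogeneousEntropy_add {A : Matrix n n ℂ} (hA : A.PosSemidef)
    {δ : ℝ} (hδ : 0 < δ) :
    ∃ H : Matrix n n ℂ, H.IsHermitian ∧ (NormedSpace.exp H).trace ≤ 1 ∧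
      -(A * H).trace.re ≤ homogeneousEntropy A + δ := by
  obtain ⟨U, hU, hU', hUA⟩ := exists_unitary_conj_diagonal_eigenvalues hA.1
  set a := hA.1.eigenvalues with ha
  have ha0 : ∀ i, 0 ≤ a i := hA.eigenvalues_nonneg
  have htr : A.trace.re = ∑ i, a i := by simp [hA.1.trace_eq_sum_eigenvalues, ha]
  set t := A.trace.re
  have ht0 : 0 ≤ t := htr ▸ Finset.sum_nonneg fun i _ => ha0 i
  set ε := δ / Fintype.card n
  have hε (i : n) : 0 < ε := by
    have : Nonempty n := ⟨i⟩
    positivity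
  refine ⟨U * diagonal (fun i => ((log ((a i + ε) / (t + δ)) : ℝ) : ℂ)) * Uᴴ,
    isHermitian_conj_diagonal_ofReal _ _, ?_, ?_⟩
  · have hsum : ∑ i, (a i + ε) ≤ t + δ := by
      rw [Finset.sum_add_distrib, ← htr, Finset.sum_const, Finset.card_univ, nsmul_eq_mul]
      gcongr
      rw [mul_div_left_comm]
      exact mul_le_of_le_one_right hδ.le (div_self_le_one _)
    rw [exp_conj_diagonal_ofReal hU', trace_mul_comm, ← mul_assoc, hU, one_mul, trace_diagonal,
      ← Complex.ofReal_sum, ← Complex.ofReal_one, Complex.real_le_real]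
    calc ∑ i, Real.exp (log ((a i + ε) / (t + δ))) = (∑ i, (a i + ε)) / (t + δ) := by
          rw [Finset.sum_div]
          refine Finset.sum_congr rfl fun i _ => Real.exp_log (div_pos ?_ (by positivity))
          exact add_pos_of_nonneg_of_pos (ha0 i) (hε i)
      _ ≤ 1 := div_le_one_of_le₀ hsum (by positivity)
  · conv_lhs => rw [hUA, trace_conj_diagonal_mul_conj_diagonal hU]
    calc -∑ i, a i * log ((a i + ε) / (t + δ))
        ≤ ∑ i, (negMulLog (a i) + a i * log (t + δ)) := by
          rw [← Finset.sum_neg_distrib]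
          refine Finset.sum_le_sum fun i _ => neg_mul_log_add_div_le (ha0 i) (hε i) (by positivity)
      _ = entropy A + t * log (t + δ) := by
          rw [Finset.sum_add_distrib, ← Finset.sum_mul, ← htr, entropy, dif_pos hA.1]
      _ ≤ homogeneousEntropy A + δ := by
          grw [mul_log_add_le ht0 hδ, homogeneousEntropy]
          linarith

lemma homogeneousEntropy_conj {m : Type*} [Fintype m] [DecidableEq m] {V : Matrix m n ℂ}
    (hV : Vᴴ * V = 1) {A : Matrix n n ℂ} (hA : A.IsHermitian) :
    homogeneousEntropy (V * A * Vᴴ) = homogeneousEntropy A := by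
  rw [homogeneousEntropy, entropy_conj hV hA, trace_mul_comm, ← Matrix.mul_assoc, hV,
    Matrix.one_mul, homogeneousEntropy]

lemma homogeneousEntropy_submatrix_equiv {m : Type*} [Fintype m] [DecidableEq m] (e : m ≃ n)
    {A : Matrix n n ℂ} (hA : A.IsHermitian) :
    homogeneousEntropy (A.submatrix e e) = homogeneousEntropy A := by
  set V := (1 : Matrix n n ℂ).submatrix e id
  have hV : Vᴴ * V = 1 := by
    simp [V, conjTranspose_submatrix, submatrix_mul_equiv]
  rw [← homogeneousEntropy_conj hV hA]
  congr 1
  ext i j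
  simp [V, Matrix.mul_apply, Matrix.one_apply]

theorem sum_homogeneousEntropy_le {ι : Type*} (s : Finset ι) {A : ι → Matrix n n ℂ}
    (hA : ∀ i ∈ s, (A i).PosSemidef) :
    ∑ i ∈ s, homogeneousEntropy (A i) ≤ homogeneousEntropy (∑ i ∈ s, A i) := by
  refine le_of_forall_pos_le_add fun δ hδ => ?_
  obtain ⟨H, hH, hexp, hle⟩ :=
    exists_neg_trace_mul_le_homogeneousEntropy_add (posSemidef_sum s hA) hδ
  calc ∑ i ∈ s, homogeneousEntropy (A i) ≤ ∑ i ∈ s, -(A i * H).trace.re :=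
        Finset.sum_le_sum fun i hi => homogeneousEntropy_le_neg_trace_mul (hA i hi) hH hexp
    _ = -((∑ i ∈ s, A i) * H).trace.re := by
        simp only [Matrix.sum_mul, trace_sum, Complex.re_sum, Finset.sum_neg_distrib]
    _ ≤ homogeneousEntropy (∑ i ∈ s, A i) + δ := hle

end Gibbs

section PartialTrace

variable {l m k : Type*}

lemma ptraceFst_eq_sum_submatrix [Fintype m] (X : Matrix (m × k) (m × k) ℂ) :
    ptraceFst X = ∑ a, X.submatrix (Prod.mk a) (Prod.mk a) := by
  ext i j
  simp [ptraceFst, Matrix.sum_apply]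

lemma ptraceSnd_eq_sum_submatrix [Fintype k] (X : Matrix (m × k) (m × k) ℂ) :
    ptraceSnd X = ∑ a, X.submatrix (·, a) (·, a) := by
  ext i j
  simp [ptraceSnd, Matrix.sum_apply]

lemma posSemidef_ptraceFst [Fintype m] {X : Matrix (m × k) (m × k) ℂ} (hX : X.PosSemidef) :
    (ptraceFst X).PosSemidef := by
  rw [ptraceFst_eq_sum_submatrix]
  exact posSemidef_sum _ fun _ _ => hX.submatrix _

lemma posSemidef_ptraceSnd [Fintype k] {X : Matrix (m × k) (m × k) ℂ} (hX : X.PosSemidef) :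
    (ptraceSnd X).PosSemidef := by
  rw [ptraceSnd_eq_sum_submatrix]
  exact posSemidef_sum _ fun _ _ => hX.submatrix _

variable [Fintype m] [Fintype k]

lemma trace_ptraceFst (X : Matrix (m × k) (m × k) ℂ) : (ptraceFst X).trace = X.trace := by
  simp only [Matrix.trace, diag, ptraceFst, of_apply, Fintype.sum_prod_type]
  exact Finset.sum_comm

lemma trace_ptraceSnd (X : Matrix (m × k) (m × k) ℂ) : (ptraceSnd X).trace = X.trace := by
  simp only [Matrix.trace, diag, ptraceSnd, of_apply, Fintype.sum_prod_type]

variable [DecidableEq k]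

lemma ptraceSnd_conj_kronecker_one (B : Matrix l m ℂ) (X : Matrix (m × k) (m × k) ℂ) :
    ptraceSnd ((B ⊗ₖ (1 : Matrix k k ℂ)) * X * (B ⊗ₖ (1 : Matrix k k ℂ))ᴴ) =
      B * ptraceSnd X * Bᴴ := by
  ext i j
  simp only [ptraceSnd, of_apply, Matrix.mul_apply, Fintype.sum_prod_type, kroneckerMap_apply,
    conjTranspose_apply, Matrix.one_apply, mul_ite, mul_one, mul_zero, ite_mul, zero_mul,
    Finset.sum_ite_eq, Finset.mem_univ, ↓reduceIte, apply_ite star, star_zero, Finset.mul_sum]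
  rw [Finset.sum_comm]
  refine Finset.sum_congr rfl fun j' _ => ?_
  simp only [Finset.sum_mul]
  exact Finset.sum_comm

lemma ptraceFst_kronecker_one_mul_comm [Fintype l] (B : Matrix l m ℂ)
    (X : Matrix (m × k) (l × k) ℂ) :
    ptraceFst ((B ⊗ₖ (1 : Matrix k k ℂ)) * X) = ptraceFst (X * (B ⊗ₖ (1 : Matrix k k ℂ))) := by
  ext i j
  simp only [ptraceFst, of_apply, Matrix.mul_apply, Fintype.sum_prod_type, kroneckerMap_apply,
    Matrix.one_apply, mul_ite, mul_one, mul_zero, ite_mul, zero_mul, Finset.sum_ite_eq,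
    Finset.sum_ite_eq', Finset.mem_univ, ↓reduceIte, mul_comm]
  exact Finset.sum_comm

lemma ptraceFst_conj_kronecker_one [Fintype l] (B : Matrix l m ℂ)
    (X : Matrix (m × k) (m × k) ℂ) :
    ptraceFst ((B ⊗ₖ (1 : Matrix k k ℂ)) * X * (B ⊗ₖ (1 : Matrix k k ℂ))ᴴ) =
      ptraceFst (((Bᴴ * B) ⊗ₖ (1 : Matrix k k ℂ)) * X) := by
  rw [Matrix.mul_assoc, ptraceFst_kronecker_one_mul_comm, Matrix.mul_assoc,
    conjTranspose_kronecker, conjTranspose_one, ← mul_kronecker_mul, Matrix.one_mul,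
    ptraceFst_kronecker_one_mul_comm]

lemma posSemidef_ptraceFst_kronecker_one_mul {P : Matrix m m ℂ} (hP : P.PosSemidef)
    {X : Matrix (m × k) (m × k) ℂ} (hX : X.PosSemidef) :
    (ptraceFst ((P ⊗ₖ (1 : Matrix k k ℂ)) * X)).PosSemidef := by
  obtain ⟨Q, rfl⟩ := exists_conjTranspose_mul_self_eq hP
  rw [← ptraceFst_conj_kronecker_one]
  exact posSemidef_ptraceFst (hX.mul_mul_conjTranspose_same _)

lemma sum_ptraceFst_kronecker_one_mul {ι : Type*} (s : Finset ι) (P : ι → Matrix m m ℂ)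
    (X : Matrix (m × k) (m × k) ℂ) :
    ∑ α ∈ s, ptraceFst ((P α ⊗ₖ (1 : Matrix k k ℂ)) * X) =
      ptraceFst (((∑ α ∈ s, P α) ⊗ₖ (1 : Matrix k k ℂ)) * X) := by
  have hadd (Y Z : Matrix (m × k) (m × k) ℂ) :
      ptraceFst (Y + Z) = ptraceFst Y + ptraceFst Z := by
    ext i j
    simp [ptraceFst, Finset.sum_add_distrib]
  have hzero : ptraceFst (0 : Matrix (m × k) (m × k) ℂ) = 0 := by
    ext i j
    simp [ptraceFst]
  induction s using Finset.cons_induction with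
  | empty => simp [hzero]
  | cons a s ha ih => rw [Finset.sum_cons, Finset.sum_cons, add_kronecker, add_mul, hadd, ih]

end PartialTrace

section Measurement

variable {m k : Type*}

lemma isHermitian_one_kronecker [DecidableEq k] {A : Matrix m m ℂ} (hA : A.IsHermitian) :
    ((1 : Matrix k k ℂ) ⊗ₖ A).IsHermitian := by
  rw [IsHermitian, conjTranspose_kronecker, conjTranspose_one, hA.eq]

lemma isHermitian_blockDiagonal [DecidableEq m] {L : m → Matrix k k ℂ}
    (hL : ∀ x, (L x).IsHermitian) : (blockDiagonal L).IsHermitian := by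
  rw [IsHermitian, blockDiagonal_conjTranspose]
  exact congrArg _ (funext hL)

lemma exp_pi_apply [Finite m] [Fintype k] [DecidableEq k] (L : m → Matrix k k ℂ) (x : m) :
    NormedSpace.exp L x = NormedSpace.exp (L x) := by
  have := Fintype.ofFinite m
  let _ : NormedRing (Matrix k k ℂ) := Matrix.linftyOpNormedRing
  let _ : NormedAlgebra ℚ (Matrix k k ℂ) := Matrix.linftyOpNormedAlgebra
  let _ : NormedAlgebra ℂ (Matrix k k ℂ) := Matrix.linftyOpNormedAlgebra
  have : CompleteSpace (Matrix k k ℂ) := FiniteDimensional.complete ℂ _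
  exact Pi.coe_exp L x

variable [Fintype m] [Fintype k]

lemma trace_mul_one_kronecker [DecidableEq k] (X : Matrix (k × m) (k × m) ℂ) (A : Matrix m m ℂ) :
    (X * ((1 : Matrix k k ℂ) ⊗ₖ A)).trace = (ptraceFst X * A).trace := by
  simp only [Matrix.trace, diag, ptraceFst, of_apply, Matrix.mul_apply, Fintype.sum_prod_type,
    kroneckerMap_apply, Matrix.one_apply, ite_mul, one_mul, zero_mul, mul_ite, mul_zero,
    Finset.sum_mul]
  rw [Finset.sum_comm]
  refine Finset.sum_congr rfl fun i _ => ?_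
  rw [Finset.sum_comm (s := (Finset.univ : Finset m))]
  refine Finset.sum_congr rfl fun a _ => ?_
  rw [Finset.sum_comm]
  simp

lemma trace_mul_blockDiagonal [DecidableEq m] {R : Type*} [CommSemiring R]
    (X : Matrix (k × m) (k × m) R) (L : m → Matrix k k R) :
    (X * blockDiagonal L).trace = ∑ x, (X.submatrix (·, x) (·, x) * L x).trace := by
  simp only [Matrix.trace, diag, Matrix.mul_apply, Fintype.sum_prod_type, blockDiagonal_apply,
    submatrix_apply]
  rw [Finset.sum_comm]
  simp

variable [DecidableEq m] [DecidableEq k]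

lemma exp_one_kronecker (A : Matrix m m ℂ) :
    NormedSpace.exp ((1 : Matrix k k ℂ) ⊗ₖ A) = (1 : Matrix k k ℂ) ⊗ₖ NormedSpace.exp A := by
  let φ : Matrix m m ℂ →+* Matrix (k × m) (k × m) ℂ :=
    { toFun B := 1 ⊗ₖ B
      map_one' := one_kronecker_one
      map_mul' B C := by rw [← mul_kronecker_mul, one_mul]
      map_zero' := kronecker_zero _
      map_add' := kronecker_add _ }
  have hφ : Continuous φ := continuous_matrix fun p q =>
    continuous_const.mul (continuous_id.matrix_elem p.2 q.2)
  let _ : NormedRing (Matrix m m ℂ) := Matrix.linftyOpNormedRing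
  let _ : NormedAlgebra ℚ (Matrix m m ℂ) := Matrix.linftyOpNormedAlgebra
  let _ : NormedAlgebra ℂ (Matrix m m ℂ) := Matrix.linftyOpNormedAlgebra
  let _ : NormedRing (Matrix (k × m) (k × m) ℂ) := Matrix.linftyOpNormedRing
  have : CompleteSpace (Matrix m m ℂ) := FiniteDimensional.complete ℂ _
  exact (NormedSpace.map_exp φ hφ A).symm

lemma trace_one_kronecker_mul_blockDiagonal {R : Type*} [CommSemiring R] (A : Matrix m m R)
    (L : m → Matrix k k R) :
    (((1 : Matrix k k R) ⊗ₖ A) * blockDiagonal L).trace = ∑ x, A x x * (L x).trace := by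
  simp only [Matrix.trace, diag, Matrix.mul_apply, Fintype.sum_prod_type, kroneckerMap_apply,
    blockDiagonal_apply, Matrix.one_apply, Finset.mul_sum]
  rw [Finset.sum_comm]
  simp

lemma trace_exp_one_kronecker_add_blockDiagonal_le {A : Matrix m m ℂ} (hA : A.IsHermitian)
    {L : m → Matrix k k ℂ} (hL : ∀ x, (L x).IsHermitian)
    (hLexp : ∀ x, (NormedSpace.exp (L x)).trace ≤ 1) :
    (NormedSpace.exp ((1 : Matrix k k ℂ) ⊗ₖ A + blockDiagonal L)).trace ≤
      (NormedSpace.exp A).trace := by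
  calc (NormedSpace.exp ((1 : Matrix k k ℂ) ⊗ₖ A + blockDiagonal L)).trace
      ≤ (((1 : Matrix k k ℂ) ⊗ₖ NormedSpace.exp A) * blockDiagonal (NormedSpace.exp L)).trace := by
        rw [← exp_one_kronecker, ← exp_blockDiagonal]
        exact trace_exp_add_le (isHermitian_one_kronecker hA) (isHermitian_blockDiagonal hL)
    _ = ∑ x, NormedSpace.exp A x x * (NormedSpace.exp (L x)).trace := by
        simp only [trace_one_kronecker_mul_blockDiagonal, exp_pi_apply]
    _ ≤ ∑ x, NormedSpace.exp A x x * 1 :=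
        Finset.sum_le_sum fun x _ =>
          mul_le_mul_of_nonneg_left (hLexp x) (posSemidef_exp hA).diag_nonneg
    _ = (NormedSpace.exp A).trace := by simp [Matrix.trace]

theorem homogeneousEntropy_le_add_sum_submatrix {σ : Matrix (k × m) (k × m) ℂ}
    (hσ : σ.PosSemidef) :
    homogeneousEntropy σ ≤ homogeneousEntropy (ptraceFst σ) +
      ∑ x, homogeneousEntropy (σ.submatrix (·, x) (·, x)) := by
  refine le_of_forall_pos_le_add fun δ hδ => ?_
  set ε := δ / (Fintype.card m + 1) with hε
  have hεpos : 0 < ε := by positivity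
  obtain ⟨A, hA, hAexp, hAle⟩ :=
    exists_neg_trace_mul_le_homogeneousEntropy_add (posSemidef_ptraceFst hσ) hεpos
  choose L hL hLexp hLle using fun x =>
    exists_neg_trace_mul_le_homogeneousEntropy_add (hσ.submatrix (·, x)) hεpos
  calc homogeneousEntropy σ
      ≤ -(σ * ((1 : Matrix k k ℂ) ⊗ₖ A + blockDiagonal L)).trace.re :=
        homogeneousEntropy_le_neg_trace_mul hσ
          ((isHermitian_one_kronecker hA).add (isHermitian_blockDiagonal hL))
          ((trace_exp_one_kronecker_add_blockDiagonal_le hA hL hLexp).trans hAexp)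
    _ = -(ptraceFst σ * A).trace.re +
          ∑ x, -(σ.submatrix (·, x) (·, x) * L x).trace.re := by
        rw [mul_add, trace_add, trace_mul_one_kronecker, trace_mul_blockDiagonal, Complex.add_re,
          Complex.re_sum, neg_add, Finset.sum_neg_distrib]
    _ ≤ (homogeneousEntropy (ptraceFst σ) + ε) +
          ∑ x, (homogeneousEntropy (σ.submatrix (·, x) (·, x)) + ε) :=
        add_le_add hAle (Finset.sum_le_sum fun x _ => hLle x)
    _ = homogeneousEntropy (ptraceFst σ) +
          ∑ x, homogeneousEntropy (σ.submatrix (·, x) (·, x)) + δ := by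
        have hεδ : (Fintype.card m + 1) * ε = δ := by
          rw [hε]
          field_simp
        rw [Finset.sum_add_distrib, Finset.sum_const, Finset.card_univ, nsmul_eq_mul]
        linear_combination hεδ

end Measurement

section GeneralizedMeasurement

variable {m k ι : Type*} [Fintype m]

/-- The Naimark dilation `v ↦ ∑ α, α ⊗ Q α v` of a family of Kraus operators `Q α`, an isometry
when `∑ α, (Q α)ᴴ * Q α = 1`. It turns the generalized measurement with outcome operators
`(Q α)ᴴ * Q α` into the measurement of the first factor of `ι × m`. -/
def naimarkDilation (Q : ι → Matrix m m ℂ) : Matrix (ι × m) m ℂ :=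
  Matrix.of fun p j => Q p.1 p.2 j

lemma conjTranspose_naimarkDilation_mul_self [DecidableEq m] [Fintype ι] {Q : ι → Matrix m m ℂ}
    (hQ : ∑ α, (Q α)ᴴ * Q α = 1) : (naimarkDilation Q)ᴴ * naimarkDilation Q = 1 := by
  rw [← hQ]
  ext i j
  simp [naimarkDilation, Matrix.mul_apply, Matrix.sum_apply, Fintype.sum_prod_type]

variable [Fintype k] [DecidableEq k]

lemma submatrix_naimarkDilation_conj (Q : ι → Matrix m m ℂ) (X : Matrix (m × k) (m × k) ℂ)
    (p : ι × m) :
    ((naimarkDilation Q ⊗ₖ (1 : Matrix k k ℂ)) * X *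
        (naimarkDilation Q ⊗ₖ (1 : Matrix k k ℂ))ᴴ).submatrix (Prod.mk p) (Prod.mk p) =
      ((Q p.1 ⊗ₖ (1 : Matrix k k ℂ)) * X * (Q p.1 ⊗ₖ (1 : Matrix k k ℂ))ᴴ).submatrix
        (Prod.mk p.2) (Prod.mk p.2) :=
  rfl

lemma sum_homogeneousEntropy_submatrix_le {X : Matrix (m × k) (m × k) ℂ} (hX : X.PosSemidef) :
    ∑ i, homogeneousEntropy (X.submatrix (Prod.mk i) (Prod.mk i)) ≤
      homogeneousEntropy (ptraceFst X) := by
  rw [ptraceFst_eq_sum_submatrix]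
  exact sum_homogeneousEntropy_le _ fun _ _ => hX.submatrix _

variable [DecidableEq m]

lemma homogeneousEntropy_le_ptraceSnd_add_sum_submatrix {X : Matrix (m × k) (m × k) ℂ}
    (hX : X.PosSemidef) :
    homogeneousEntropy X ≤ homogeneousEntropy (ptraceSnd X) +
      ∑ i, homogeneousEntropy (X.submatrix (Prod.mk i) (Prod.mk i)) := by
  rw [← homogeneousEntropy_submatrix_equiv (Equiv.prodComm k m) hX.1]
  exact homogeneousEntropy_le_add_sum_submatrix (hX.submatrix _)

variable [Fintype ι] {P : ι → Matrix m m ℂ} {ρ : Matrix (m × k) (m × k) ℂ}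

theorem homogeneousEntropy_le_ptraceSnd_add_sum (hρ : ρ.PosSemidef)
    (hP : ∀ α, (P α).PosSemidef) (hPsum : ∑ α, P α = 1) :
    homogeneousEntropy ρ ≤ homogeneousEntropy (ptraceSnd ρ) +
      ∑ α, homogeneousEntropy (ptraceFst ((P α ⊗ₖ (1 : Matrix k k ℂ)) * ρ)) := by
  classical
  choose Q hQ using fun α => exists_conjTranspose_mul_self_eq (hP α)
  set V := naimarkDilation Q
  have hV : Vᴴ * V = 1 := conjTranspose_naimarkDilation_mul_self (by simpa only [hQ] using hPsum)
  set W := V ⊗ₖ (1 : Matrix k k ℂ)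
  have hW : Wᴴ * W = 1 := by
    rw [conjTranspose_kronecker, ← mul_kronecker_mul, hV, conjTranspose_one, one_mul,
      one_kronecker_one]
  let K (α : ι) : Matrix (m × k) (m × k) ℂ :=
    (Q α ⊗ₖ (1 : Matrix k k ℂ)) * ρ * (Q α ⊗ₖ (1 : Matrix k k ℂ))ᴴ
  calc homogeneousEntropy ρ = homogeneousEntropy (W * ρ * Wᴴ) :=
        (homogeneousEntropy_conj hW hρ.1).symm
    _ ≤ homogeneousEntropy (ptraceSnd (W * ρ * Wᴴ)) +
          ∑ p, homogeneousEntropy ((W * ρ * Wᴴ).submatrix (Prod.mk p) (Prod.mk p)) :=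
        homogeneousEntropy_le_ptraceSnd_add_sum_submatrix (hρ.mul_mul_conjTranspose_same W)
    _ = homogeneousEntropy (ptraceSnd ρ) +
          ∑ α, ∑ i, homogeneousEntropy ((K α).submatrix (Prod.mk i) (Prod.mk i)) := by
        rw [ptraceSnd_conj_kronecker_one, homogeneousEntropy_conj hV (posSemidef_ptraceSnd hρ).1]
        simp only [W, V, submatrix_naimarkDilation_conj, Fintype.sum_prod_type, K]
    _ ≤ homogeneousEntropy (ptraceSnd ρ) + ∑ α, homogeneousEntropy (ptraceFst (K α)) := by
        gcongr with α
        exact sum_homogeneousEntropy_submatrix_le (hρ.mul_mul_conjTranspose_same _)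
    _ = homogeneousEntropy (ptraceSnd ρ) +
          ∑ α, homogeneousEntropy (ptraceFst ((P α ⊗ₖ (1 : Matrix k k ℂ)) * ρ)) := by
        simp only [K, ptraceFst_conj_kronecker_one, hQ]

theorem sum_homogeneousEntropy_ptraceFst_le (hρ : ρ.PosSemidef)
    (hP : ∀ α, (P α).PosSemidef) (hPsum : ∑ α, P α = 1) :
    ∑ α, homogeneousEntropy (ptraceFst ((P α ⊗ₖ (1 : Matrix k k ℂ)) * ρ)) ≤
      homogeneousEntropy (ptraceFst ρ) := by
  grw [sum_homogeneousEntropy_le _ fun α _ => posSemidef_ptraceFst_kronecker_one_mul (hP α) hρ,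
    sum_ptraceFst_kronecker_one_mul, hPsum, one_kronecker_one, one_mul]

end GeneralizedMeasurement

theorem improved_subadditivity_general {n₁ n₂ ι : Type*} [Fintype n₁] [Fintype n₂]
    [DecidableEq n₁] [DecidableEq n₂] [Fintype ι] (ρ : Matrix (n₁ × n₂) (n₁ × n₂) ℂ)
    (hρ : ρ.PosSemidef) (hρtr : ρ.trace ≤ 1) (P : ι → Matrix n₁ n₁ ℂ)
    (hP : ∀ α, (P α).PosSemidef) (hPsum : ∑ α, P α = 1) (n : ι → ℝ)
    (hn : ∀ α, n α = (((P α ⊗ₖ (1 : Matrix n₂ n₂ ℂ)) * ρ).trace).re)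
    (ρ2 : ι → Matrix n₂ n₂ ℂ)
    (hρ2 : ∀ α, 0 < n α → ρ2 α = ((n α : ℂ))⁻¹ •
      ptraceFst ((P α ⊗ₖ (1 : Matrix n₂ n₂ ℂ)) * ρ)) :
    entropy ρ ≤ entropy (ptraceSnd ρ) +
        ∑ α ∈ Finset.univ.filter (fun α => 0 < n α), n α * entropy (ρ2 α) ∧
    entropy (ptraceSnd ρ) +
        (∑ α ∈ Finset.univ.filter (fun α => 0 < n α), n α * entropy (ρ2 α)) ≤
      entropy (ptraceSnd ρ) + entropy (ptraceFst ρ) := by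
  let R α := ptraceFst ((P α ⊗ₖ (1 : Matrix n₂ n₂ ℂ)) * ρ)
  have hR α : (R α).PosSemidef := posSemidef_ptraceFst_kronecker_one_mul (hP α) hρ
  have htr α : (R α).trace.re = n α := by rw [hn, trace_ptraceFst]
  have hn0 α : 0 ≤ n α := htr α ▸ (Complex.le_def.1 (hR α).trace_nonneg).1
  have hterm α : homogeneousEntropy (R α) = if 0 < n α then n α * entropy (ρ2 α) else 0 := by
    rw [homogeneousEntropy_eq_mul_entropy_inv_smul (hR α), htr]
    split_ifs with hpos
    · rw [hρ2 α hpos]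
    · rw [le_antisymm (not_lt.1 hpos) (hn0 α), zero_mul]
  have hfst := homogeneousEntropy_le_ptraceSnd_add_sum hρ hP hPsum
  have hsnd := sum_homogeneousEntropy_ptraceFst_le hρ hP hPsum
  have hnonneg : 0 ≤ negMulLog ρ.trace.re :=
    negMulLog_nonneg (Complex.le_def.1 hρ.trace_nonneg).1 (Complex.le_def.1 hρtr).1
  simp only [Finset.sum_filter, ← hterm]
  rw [homogeneousEntropy, homogeneousEntropy, trace_ptraceSnd] at hfst
  rw [homogeneousEntropy.eq_def (ptraceFst ρ), trace_ptraceFst] at hsnd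
  exact ⟨by linarith, by linarith⟩

/-- **Improved subadditivity** (Corollary 4, finite case):
`S[ρ₁₂] ≤ S[ρ₁] + ∑_{α : n^α>0} n^α S[ρ₂^α] ≤ S[ρ₁] + S[ρ₂]`. -/
theorem improved_subadditivity
    {n₁ n₂ : Type*} [Fintype n₁] [Fintype n₂]
    [DecidableEq n₁] [DecidableEq n₂] {M : ℕ}
    (ρ : Matrix (n₁ × n₂) (n₁ × n₂) ℂ)
    (hρ : ρ.PosSemidef) (hρtr : ρ.trace = 1)
    (P : Fin M → Matrix n₁ n₁ ℂ)
    (hP : ∀ α, (P α).PosSemidef)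
    (hPsum : ∑ α, P α = 1)
    (n : Fin M → ℝ)
    (hn : ∀ α, n α = (((P α ⊗ₖ (1 : Matrix n₂ n₂ ℂ)) * ρ).trace).re)
    (ρ2 : Fin M → Matrix n₂ n₂ ℂ)
    (hρ2 : ∀ α, 0 < n α → ρ2 α = ((n α : ℂ))⁻¹ •
      ptraceFst ((P α ⊗ₖ (1 : Matrix n₂ n₂ ℂ)) * ρ)) :
    entropy ρ ≤ entropy (ptraceSnd ρ) +
        ∑ α ∈ Finset.univ.filter (fun α => 0 < n α), n α * entropy (ρ2 α)
    ∧ entropy (ptraceSnd ρ) +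
        (∑ α ∈ Finset.univ.filter (fun α => 0 < n α), n α * entropy (ρ2 α)) ≤
      entropy (ptraceSnd ρ) + entropy (ptraceFst ρ) :=
  improved_subadditivity_general ρ hρ hρtr.le P hP hPsum n hn ρ2 hρ2
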